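/- Let γ > 1 be a real number, let n₀, m₀ be coprime positive integers, and set α = γ^{−n₀}, β = γ^{−m₀}; assume 0 < α, β < 1/2 and τ(C_α)·τ(C_β) < 1. If 1/γ > τ(C_α)·τ(C_β), then for every real number λ, C_α − λ·C_β ≠ [−λ, 1]. -/

import Mathlib

/-!
Reflecting `C_b` by `y ↦ 1 - y` turns `C_a - l • C_b` into a translate of `C_a + l • C_b`, so for
`l > 0` we look for a point of `[0, 1 + l]` that this sum misses. By self-similarity `C_a` avoids
the interval `(a ^ (k + 1), a ^ k * (1 - a))`, and `l • C_b` avoids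
`(l * b ^ (j + 1), l * b ^ j * (1 - b))`. A number `e` to the left of the right ends of both gaps
can be a sum of points of the two sets only if both summands lie to the left of the gaps, so it is
missed as soon as it exceeds the sum of the two left ends. Such an `e` exists precisely when
`s = l * b ^ j / a ^ k` satisfies `a / (1 - 2 * b) < s < (1 - 2 * a) / b`.

For `a = γ ^ (-n)` and `b = γ ^ (-m)` with `n`, `m` coprime, `s` can be made equal to `l * γ ^ i`
for every integer `i`, and the bound on the product of the thicknesses says that the interval of
admissible `s` has endpoints of ratio greater than `γ`, so it contains some `l * γ ^ i`.
-/

open Set MeasureTheory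

/-- The middle Cantor set `C_a`, for `0 < a < 1/2`:
`C_a = { (1-a) * ∑ εₖ aᵏ : εₖ ∈ {0,1} }`. -/
noncomputable def middleCantor (a : ℝ) : Set ℝ :=
  {x : ℝ | ∃ ε : ℕ → Bool, x = (1 - a) * ∑' k : ℕ, (if ε k then a ^ k else 0)}

/-- The arithmetic difference `C_a - l · C_b`. -/
noncomputable def diffSet (a b l : ℝ) : Set ℝ :=
  {z : ℝ | ∃ x ∈ middleCantor a, ∃ y ∈ middleCantor b, z = x - l * y}

section MiddleCantor

variable {a x : ℝ}

lemma zero_mem_middleCantor (a : ℝ) : 0 ∈ middleCantor a :=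
  ⟨fun _ ↦ false, by simp⟩

lemma summable_ite_pow (ha : |a| < 1) (ε : ℕ → Bool) :
    Summable fun k ↦ if ε k then a ^ k else 0 := by
  refine ((summable_geometric_of_abs_lt_one ha).indicator {k | ε k}).congr fun k ↦ ?_
  simp [indicator_apply]

lemma one_sub_mem_middleCantor (ha : |a| < 1) (hx : x ∈ middleCantor a) :
    1 - x ∈ middleCantor a := by
  obtain ⟨ε, rfl⟩ := hx
  refine ⟨fun k ↦ !ε k, ?_⟩
  have hsum : ∑' k, (if ε k then a ^ k else 0) + ∑' k, (if !ε k then a ^ k else 0) = (1 - a)⁻¹ := by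
    rw [← (summable_ite_pow ha ε).tsum_add (summable_ite_pow ha fun k ↦ !ε k),
      ← tsum_geometric_of_abs_lt_one ha]
    refine tsum_congr fun k ↦ ?_
    cases ε k <;> simp
  rw [sub_eq_iff_eq_add', ← mul_add, hsum, mul_inv_cancel₀ (sub_pos.2 (abs_lt.1 ha).2).ne']

lemma middleCantor_subset_Icc (ha0 : 0 ≤ a) (ha1 : a < 1) : middleCantor a ⊆ Icc 0 1 := by
  have hnonneg : ∀ y ∈ middleCantor a, 0 ≤ y := by
    rintro _ ⟨ε, rfl⟩
    refine mul_nonneg (sub_nonneg.2 ha1.le) (tsum_nonneg fun k ↦ ?_)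
    split_ifs <;> positivity
  have ha : |a| < 1 := by rwa [abs_of_nonneg ha0]
  exact fun x hx ↦ ⟨hnonneg x hx, sub_nonneg.1 (hnonneg _ (one_sub_mem_middleCantor ha hx))⟩

lemma exists_eq_mul_or_eq_mul_add_of_mem_middleCantor (ha : |a| < 1) (hx : x ∈ middleCantor a) :
    ∃ y ∈ middleCantor a, x = a * y ∨ x = a * y + (1 - a) := by
  obtain ⟨ε, rfl⟩ := hx
  refine ⟨_, ⟨fun k ↦ ε (k + 1), rfl⟩, ?_⟩
  have htail : ∑' k, (if ε (k + 1) then a ^ (k + 1) else 0) =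
      a * ∑' k, (if ε (k + 1) then a ^ k else 0) := by
    simp only [← tsum_mul_left, mul_ite, mul_zero, pow_succ']
  rw [(summable_ite_pow ha ε).tsum_eq_zero_add, htail]
  cases ε 0
  · left
    simp only [Bool.false_eq_true, if_false]
    ring
  · right
    simp only [if_true, pow_zero]
    ring

lemma le_pow_succ_or_pow_mul_le_of_mem_middleCantor (ha0 : 0 ≤ a) (ha1 : a < 1)
    (hx : x ∈ middleCantor a) (k : ℕ) : x ≤ a ^ (k + 1) ∨ a ^ k * (1 - a) ≤ x := by
  have ha : |a| < 1 := by rwa [abs_of_nonneg ha0]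
  induction k generalizing x with
  | zero =>
    obtain ⟨y, hy, rfl | rfl⟩ := exists_eq_mul_or_eq_mul_add_of_mem_middleCantor ha hx
    · left
      simpa using mul_le_of_le_one_right ha0 (middleCantor_subset_Icc ha0 ha1 hy).2
    · right
      simpa using mul_nonneg ha0 (middleCantor_subset_Icc ha0 ha1 hy).1
  | succ k ih =>
    obtain ⟨y, hy, rfl | rfl⟩ := exists_eq_mul_or_eq_mul_add_of_mem_middleCantor ha hx
    · rw [pow_succ' a (k + 1), show a ^ (k + 1) * (1 - a) = a * (a ^ k * (1 - a)) by ring]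
      exact (ih hy).imp (mul_le_mul_of_nonneg_left · ha0) (mul_le_mul_of_nonneg_left · ha0)
    · right
      calc a ^ (k + 1) * (1 - a) ≤ 1 - a :=
            mul_le_of_le_one_left (sub_nonneg.2 ha1.le) (pow_le_one₀ ha0 ha1.le)
        _ ≤ a * y + (1 - a) :=
            le_add_of_nonneg_left (mul_nonneg ha0 (middleCantor_subset_Icc ha0 ha1 hy).1)

lemma half_notMem_middleCantor (ha0 : 0 ≤ a) (ha : a < 1 / 2) : 1 / 2 ∉ middleCantor a := by
  intro h
  rcases le_pow_succ_or_pow_mul_le_of_mem_middleCantor ha0 (by linarith) h 0 with h | h <;>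
    norm_num at h <;> linarith

end MiddleCantor

section DiffSet

variable {a b l : ℝ}

lemma diffSet_zero (a b : ℝ) : diffSet a b 0 = middleCantor a := by
  ext z
  constructor
  · rintro ⟨x, hx, y, -, rfl⟩
    simpa using hx
  · exact fun hz ↦ ⟨z, hz, 0, zero_mem_middleCantor b, by simp⟩

lemma zero_mem_diffSet (a b l : ℝ) : 0 ∈ diffSet a b l :=
  ⟨0, zero_mem_middleCantor a, 0, zero_mem_middleCantor b, by simp⟩

lemma diffSet_ne_Icc_of_nonpos (ha0 : 0 ≤ a) (ha : a < 1 / 2) (b : ℝ) (hl : l ≤ 0) :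
    diffSet a b l ≠ Icc (-l) 1 := by
  intro heq
  rcases hl.lt_or_eq with hl | rfl
  · have h0 : (0 : ℝ) ∈ Icc (-l) 1 := heq ▸ zero_mem_diffSet a b l
    linarith [h0.1]
  · rw [diffSet_zero] at heq
    exact half_notMem_middleCantor ha0 ha (heq ▸ by norm_num)

lemma sub_notMem_diffSet {e : ℝ} (ha0 : 0 ≤ a) (ha1 : a < 1) (hb0 : 0 ≤ b) (hb1 : b < 1)
    (hl : 0 ≤ l) {k j : ℕ} (h_left : a ^ (k + 1) + l * b ^ (j + 1) < e)
    (h_right_a : e < a ^ k * (1 - a)) (h_right_b : e < l * (b ^ j * (1 - b))) :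
    e - l ∉ diffSet a b l := by
  rintro ⟨x, hx, y, hy, hxy⟩
  have hy' : 1 - y ∈ middleCantor b :=
    one_sub_mem_middleCantor (by rwa [abs_of_nonneg hb0]) hy
  have he : e = x + l * (1 - y) := by linarith
  have hx0 : 0 ≤ x := (middleCantor_subset_Icc ha0 ha1 hx).1
  have hy0 : 0 ≤ l * (1 - y) := mul_nonneg hl (middleCantor_subset_Icc hb0 hb1 hy').1
  have hx_left : x ≤ a ^ (k + 1) :=
    (le_pow_succ_or_pow_mul_le_of_mem_middleCantor ha0 ha1 hx k).resolve_right (by linarith)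
  have hy_left : 1 - y ≤ b ^ (j + 1) :=
    (le_pow_succ_or_pow_mul_le_of_mem_middleCantor hb0 hb1 hy' j).resolve_right fun h ↦ by
      linarith [mul_le_mul_of_nonneg_left h hl]
  linarith [he, hx_left, mul_le_mul_of_nonneg_left hy_left hl]

lemma not_Icc_subset_diffSet_of_gaps (ha0 : 0 ≤ a) (ha1 : a < 1) (hb0 : 0 ≤ b) (hb1 : b < 1)
    (hl : 0 ≤ l) {k j : ℕ} (h_a : a ^ (k + 1) + l * b ^ (j + 1) < a ^ k * (1 - a))
    (h_b : a ^ (k + 1) + l * b ^ (j + 1) < l * (b ^ j * (1 - b))) :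
    ¬ Icc (-l) 1 ⊆ diffSet a b l := by
  obtain ⟨e, he_left, he_right⟩ := exists_between (lt_min h_a h_b)
  obtain ⟨he_a, he_b⟩ := lt_min_iff.1 he_right
  have he0 : 0 < e := lt_of_le_of_lt (by positivity) he_left
  have he1 : e < 1 := he_a.trans_le <|
    mul_le_one₀ (pow_le_one₀ ha0 ha1.le) (sub_nonneg.2 ha1.le) (sub_le_self 1 ha0)
  exact fun hsub ↦ sub_notMem_diffSet ha0 ha1 hb0 hb1 hl he_left he_a he_b
    (hsub ⟨by linarith, by linarith⟩)

lemma not_Icc_subset_diffSet_of_ratio {s : ℝ} (ha0 : 0 < a) (ha1 : a < 1) (hb0 : 0 < b)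
    (hb : b < 1 / 2) (hl : 0 ≤ l) {k j : ℕ} (hs : l * b ^ j = a ^ k * s)
    (hs_mem : s ∈ Ioo (a / (1 - 2 * b)) ((1 - 2 * a) / b)) :
    ¬ Icc (-l) 1 ⊆ diffSet a b l := by
  have h_lower : a < s * (1 - 2 * b) := (div_lt_iff₀ (by linarith)).1 hs_mem.1
  have h_upper : s * b < 1 - 2 * a := (lt_div_iff₀ hb0).1 hs_mem.2
  have h_left : a ^ (k + 1) + l * b ^ (j + 1) = a ^ k * (a + s * b) := by
    linear_combination b * hs
  have h_right : l * (b ^ j * (1 - b)) = a ^ k * (s * (1 - b)) := by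
    linear_combination (1 - b) * hs
  have hak : 0 < a ^ k := by positivity
  apply not_Icc_subset_diffSet_of_gaps ha0.le ha1 hb0.le (by linarith) hl (k := k) (j := j)
  · rw [h_left]
    exact mul_lt_mul_of_pos_left (by linarith) hak
  · rw [h_left, h_right]
    exact mul_lt_mul_of_pos_left (by linarith) hak

end DiffSet

lemma exists_natCast_mul_sub_natCast_mul_eq {n m : ℕ} (hn : 0 < n) (hm : 0 < m)
    (hnm : n.Coprime m) (i : ℤ) : ∃ k j : ℕ, (n : ℤ) * k - m * j = i := by
  obtain ⟨u, v, huv⟩ : IsCoprime (n : ℤ) m := Nat.isCoprime_iff_coprime.2 hnm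
  -- Adding a large multiple of `(m, n)` to the Bézout solution `(i * u, -(i * v))` makes it
  -- nonnegative.
  set N := |i * u| + |i * v|
  have hk : 0 ≤ i * u + N * m := by
    have : N ≤ N * m := le_mul_of_one_le_right (by positivity) (by exact_mod_cast hm)
    linarith [neg_abs_le (i * u), abs_nonneg (i * v)]
  have hj : 0 ≤ -(i * v) + N * n := by
    have : N ≤ N * n := le_mul_of_one_le_right (by positivity) (by exact_mod_cast hn)
    linarith [le_abs_self (i * v), abs_nonneg (i * u)]
  obtain ⟨k, hk⟩ := Int.eq_ofNat_of_zero_le hk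
  obtain ⟨j, hj⟩ := Int.eq_ofNat_of_zero_le hj
  refine ⟨k, j, ?_⟩
  linear_combination i * huv - n * hk + m * hj

lemma exists_zpow_neg_pow_eq_mul_zpow {G₀ : Type*} [CommGroupWithZero G₀] {g : G₀} (hg : g ≠ 0)
    {n m : ℕ} (hn : 0 < n) (hm : 0 < m) (hnm : n.Coprime m) (i : ℤ) :
    ∃ k j : ℕ, (g ^ (-(m : ℤ))) ^ j = (g ^ (-(n : ℤ))) ^ k * g ^ i := by
  obtain ⟨k, j, rfl⟩ := exists_natCast_mul_sub_natCast_mul_eq hn hm hnm i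
  refine ⟨k, j, ?_⟩
  rw [← zpow_natCast, ← zpow_natCast, ← zpow_mul, ← zpow_mul, ← zpow_add₀ hg]
  congr 1
  ring

lemma exists_mul_zpow_mem_Ioo {K : Type*} [Field K] [LinearOrder K] [IsStrictOrderedRing K]
    [Archimedean K] {g l A B : K} (hg : 1 < g) (hl : 0 < l) (hA : 0 < A) (hAB : g * A < B) :
    ∃ i : ℤ, l * g ^ i ∈ Ioo A B := by
  obtain ⟨i, hi_le, hi_lt⟩ := exists_mem_Ico_zpow (div_pos hA hl) hg
  refine ⟨i + 1, (div_lt_iff₀' hl).1 hi_lt, ?_⟩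
  have hg0 : 0 < g := one_pos.trans hg
  calc l * g ^ (i + 1) = g * (l * g ^ i) := by rw [zpow_add_one₀ hg0.ne']; ring
    _ ≤ g * A := mul_le_mul_of_nonneg_left ((le_div_iff₀' hl).1 hi_le) hg0.le
    _ < B := hAB

lemma mul_div_lt_div_iff_thickness_mul_lt {K : Type*} [Field K] [LinearOrder K]
    [IsStrictOrderedRing K] {g a b : K} (hg : 0 < g) (ha : a < 1 / 2) (hb0 : 0 < b)
    (hb : b < 1 / 2) :
    g * (a / (1 - 2 * b)) < (1 - 2 * a) / b ↔
      (a / (1 - 2 * a)) * (b / (1 - 2 * b)) < 1 / g := by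
  have ha' : 0 < 1 - 2 * a := by linarith
  have hb' : 0 < 1 - 2 * b := by linarith
  rw [← mul_div_assoc, div_lt_div_iff₀ hb' hb0, div_mul_div_comm,
    div_lt_div_iff₀ (mul_pos ha' hb') hg, one_mul, mul_rotate]

theorem stmt9 (γ : ℝ) (hγ : 1 < γ) (n₀ m₀ : ℕ) (hn₀ : 0 < n₀) (hm₀ : 0 < m₀)
    (hcop : Nat.Coprime n₀ m₀) (α β : ℝ)
    (hαdef : α = γ ^ (-(n₀ : ℤ))) (hβdef : β = γ ^ (-(m₀ : ℤ)))
    (hα0 : 0 < α) (hα : α < 1 / 2) (hβ0 : 0 < β) (hβ : β < 1 / 2)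
    (hτ : (α / (1 - 2 * α)) * (β / (1 - 2 * β)) < 1)
    (hγτ : (α / (1 - 2 * α)) * (β / (1 - 2 * β)) < 1 / γ) :
    ∀ l : ℝ, diffSet α β l ≠ Set.Icc (-l) 1 := by
  intro l
  rcases le_or_gt l 0 with hl | hl
  · exact diffSet_ne_Icc_of_nonpos hα0.le hα β hl
  have hγ0 : 0 < γ := one_pos.trans hγ
  obtain ⟨i, hi⟩ : ∃ i : ℤ, l * γ ^ i ∈ Ioo (α / (1 - 2 * β)) ((1 - 2 * α) / β) :=
    exists_mul_zpow_mem_Ioo hγ hl (div_pos hα0 (by linarith))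
      ((mul_div_lt_div_iff_thickness_mul_lt hγ0 hα hβ0 hβ).2 hγτ)
  obtain ⟨k, j, hkj⟩ : ∃ k j : ℕ, β ^ j = α ^ k * γ ^ i := by
    rw [hαdef, hβdef]
    exact exists_zpow_neg_pow_eq_mul_zpow hγ0.ne' hn₀ hm₀ hcop i
  have hscale : l * β ^ j = α ^ k * (l * γ ^ i) := by rw [hkj, mul_left_comm]
  exact fun heq ↦ not_Icc_subset_diffSet_of_ratio hα0 (by linarith) hβ0 hβ hl.le hscale hi heq.ge
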